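/- Let d ≥ 1 and let μ be a finite positive-semidefinite-matrix-valued Borel measure on ℝ that is symmetric, and let Ξ be the associated matrix-valued function Ξ_{k,q}(t) = ∫_ℝ (cos(tν) − 1) μ_{k,q}(dν). Then for all indices k, q ∈ {1,…,d}, the Cesàro means converge: lim_{t→∞} (1/t) ∫₀ᵗ Ξ_{k,q}(s) ds = −μ_{k,q}(ℝ ∖ {0}). -/

import Mathlib

open MeasureTheory

/-- A finite positive-semidefinite-matrix-valued Borel measure on `ℝ`: a countably additive map
from the Borel σ-algebra of `ℝ` to the real symmetric `d×d` matrices taking positive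
semidefinite values on every Borel set; it is encoded through its entries, which are finite
signed Borel measures on `ℝ`. -/
structure MatrixMeasure (d : ℕ) where
  /-- the entries, as finite signed Borel measures -/
  entry : Fin d → Fin d → SignedMeasure ℝ
  /-- on every Borel set the value is a (symmetric) positive semidefinite real matrix -/
  posSemidef : ∀ X : Set ℝ, MeasurableSet X →
    (Matrix.of fun k q => entry k q X).PosSemidef

/-- The integral `∫ f dν` of a function against a finite signed Borel measure `ν`, defined via
the Jordan decomposition of `ν`. -/
noncomputable def sintegral (ν : SignedMeasure ℝ) (f : ℝ → ℝ) : ℝ :=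
  (∫ x, f x ∂ν.toJordanDecomposition.posPart) - ∫ x, f x ∂ν.toJordanDecomposition.negPart

/-- The matrix-valued function `Ξ(t)` with entries
`Ξ_{k,q}(t) := ∫ (cos(tν) − 1) μ_{k,q}(dν)`. -/
noncomputable def Xi {d : ℕ} (μ : MatrixMeasure d) (t : ℝ) : Matrix (Fin d) (Fin d) ℝ :=
  Matrix.of fun k q => sintegral (μ.entry k q) (fun ν => Real.cos (t * ν) - 1)

/-- The matrix-valued measure `μ` is symmetric: `μ(X) = μ(−X)` for every Borel set `X`. -/
def MatrixMeasure.IsSymmetric {d : ℕ} (μ : MatrixMeasure d) : Prop :=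
  ∀ (k q : Fin d) (X : Set ℝ), MeasurableSet X → μ.entry k q X = μ.entry k q (-X)

open Filter Set Real
open scoped Topology

/-! Averaging `cos (s x) - 1` over `s ∈ [0, t]` gives `sinc (t x) - 1`, so by Fubini the Cesàro mean
is the integral of `sinc (t x) - 1` against the signed measure. As `t → ∞` this bounded integrand
tends to `0` at `x = 0` and to `-1` elsewhere, and dominated convergence concludes. -/

section TotalVariation

variable {α : Type*} [MeasurableSpace α] (ν : SignedMeasure α)

lemma posPart_le_totalVariation : ν.toJordanDecomposition.posPart ≤ ν.totalVariation :=
  Measure.le_add_right le_rfl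

lemma negPart_le_totalVariation : ν.toJordanDecomposition.negPart ≤ ν.totalVariation :=
  Measure.le_add_left le_rfl

end TotalVariation

section Sintegral

variable (ν : SignedMeasure ℝ)

lemma sintegral_const_mul (c : ℝ) (f : ℝ → ℝ) :
    sintegral ν (fun x => c * f x) = c * sintegral ν f := by
  simp only [sintegral, integral_const_mul, mul_sub]

lemma sintegral_indicator_const {X : Set ℝ} (hX : MeasurableSet X) (c : ℝ) :
    sintegral ν (X.indicator fun _ => c) = c * ν X := by
  rw [sintegral, integral_indicator_const c hX, integral_indicator_const c hX,
    ν.apply_eq_posPart_real_sub_negPart_real hX, smul_eq_mul, smul_eq_mul]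
  ring

lemma intervalIntegral_sintegral_swap {a b : ℝ} {f : ℝ → ℝ → ℝ}
    (hf : Integrable (Function.uncurry f) ((volume.restrict (uIoc a b)).prod ν.totalVariation)) :
    ∫ s in a..b, sintegral ν (f s) = sintegral ν fun x => ∫ s in a..b, f s x := by
  have hpos := hf.mono_measure (Measure.prod_mono le_rfl (posPart_le_totalVariation ν))
  have hneg := hf.mono_measure (Measure.prod_mono le_rfl (negPart_le_totalVariation ν))
  calc ∫ s in a..b, sintegral ν (f s)
    _ = (∫ s in a..b, ∫ x, f s x ∂ν.toJordanDecomposition.posPart) -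
        ∫ s in a..b, ∫ x, f s x ∂ν.toJordanDecomposition.negPart :=
      intervalIntegral.integral_sub (intervalIntegrable_iff.2 hpos.integral_prod_left)
        (intervalIntegrable_iff.2 hneg.integral_prod_left)
    _ = sintegral ν fun x => ∫ s in a..b, f s x := by
      rw [intervalIntegral_integral_swap hpos, intervalIntegral_integral_swap hneg, sintegral]

lemma tendsto_sintegral_filter_of_dominated_convergence {ι : Type*} {l : Filter ι}
    [l.IsCountablyGenerated] {F : ι → ℝ → ℝ} {f : ℝ → ℝ} (bound : ℝ → ℝ)
    (hF_meas : ∀ᶠ n in l, AEStronglyMeasurable (F n) ν.totalVariation)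
    (h_bound : ∀ᶠ n in l, ∀ᵐ x ∂ν.totalVariation, ‖F n x‖ ≤ bound x)
    (bound_integrable : Integrable bound ν.totalVariation)
    (h_lim : ∀ᵐ x ∂ν.totalVariation, Tendsto (fun n => F n x) l (𝓝 (f x))) :
    Tendsto (fun n => sintegral ν (F n)) l (𝓝 (sintegral ν f)) := by
  have tendsto_integral {m : Measure ℝ} (hm : m ≤ ν.totalVariation) :
      Tendsto (fun n => ∫ x, F n x ∂m) l (𝓝 (∫ x, f x ∂m)) :=
    tendsto_integral_filter_of_dominated_convergence bound
      (hF_meas.mono fun _ h => h.mono_measure hm) (h_bound.mono fun _ h => ae_mono hm h)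
      (bound_integrable.mono_measure hm) (ae_mono hm h_lim)
  exact (tendsto_integral (posPart_le_totalVariation ν)).sub
    (tendsto_integral (negPart_le_totalVariation ν))

end Sintegral

lemma average_cos_mul {t : ℝ} (ht : t ≠ 0) (x : ℝ) :
    (1 / t) * ∫ s in (0 : ℝ)..t, cos (s * x) = sinc (t * x) := by
  rcases eq_or_ne x 0 with rfl | hx
  · simp [ht]
  · rw [intervalIntegral.integral_comp_mul_right cos hx, integral_cos, zero_mul, sin_zero, sub_zero,
      sinc_of_ne_zero (mul_ne_zero ht hx), smul_eq_mul]
    field_simp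

lemma average_cos_mul_sub_one {t : ℝ} (ht : t ≠ 0) (x : ℝ) :
    (1 / t) * ∫ s in (0 : ℝ)..t, (cos (s * x) - 1) = sinc (t * x) - 1 := by
  rw [intervalIntegral.integral_sub (Continuous.intervalIntegrable (by fun_prop) _ _)
    intervalIntegrable_const, mul_sub, average_cos_mul ht]
  simp [ht]

lemma tendsto_sinc_cobounded : Tendsto sinc (Bornology.cobounded ℝ) (𝓝 0) := by
  have h : Tendsto (fun x : ℝ => sin x * x⁻¹) (Bornology.cobounded ℝ) (𝓝 0) :=
    bdd_le_mul_tendsto_zero' 1 (.of_forall abs_sin_le_one) tendsto_inv₀_cobounded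
  refine h.congr' ?_
  filter_upwards [Bornology.eventually_ne_cobounded 0] with x hx
  rw [sinc_of_ne_zero hx, div_eq_mul_inv]

lemma tendsto_sinc_mul_sub_one (x : ℝ) :
    Tendsto (fun t : ℝ => sinc (t * x) - 1) atTop
      (𝓝 (({0}ᶜ : Set ℝ).indicator (fun _ => -1) x)) := by
  rcases eq_or_ne x 0 with rfl | hx
  · simp
  · have h : Tendsto (fun t : ℝ => t * x) atTop (Bornology.cobounded ℝ) :=
      (tendsto_mul_right_cobounded hx).comp IsOrderBornology.atTop_le_cobounded
    simpa [hx] using (tendsto_sinc_cobounded.comp h).sub_const 1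

lemma norm_sub_one_le_two {R : Type*} [SeminormedRing R] [NormOneClass R] {y : R} (hy : ‖y‖ ≤ 1) :
    ‖y - 1‖ ≤ 2 :=
  calc ‖y - 1‖
    _ ≤ ‖y‖ + ‖(1 : R)‖ := norm_sub_le y 1
    _ ≤ 2 := by rw [norm_one]; linarith

lemma average_sintegral_cos_mul_sub_one (ν : SignedMeasure ℝ) {t : ℝ} (ht : t ≠ 0) :
    (1 / t) * ∫ s in (0 : ℝ)..t, sintegral ν (fun x => cos (s * x) - 1) =
      sintegral ν fun x => sinc (t * x) - 1 := by
  have : IsFiniteMeasure (volume.restrict (uIoc 0 t)) := by rw [uIoc]; infer_instance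
  have hint : Integrable (Function.uncurry fun s x : ℝ => cos (s * x) - 1)
      ((volume.restrict (uIoc 0 t)).prod ν.totalVariation) :=
    .of_bound (by fun_prop) 2 (.of_forall fun p => norm_sub_one_le_two (abs_cos_le_one _))
  simp only [intervalIntegral_sintegral_swap ν hint, ← sintegral_const_mul,
    average_cos_mul_sub_one ht]

theorem statement1_general (ν : SignedMeasure ℝ) :
    Tendsto (fun t : ℝ => (1 / t) * ∫ s in (0 : ℝ)..t, sintegral ν (fun x => cos (s * x) - 1))
      atTop (𝓝 (-ν ({0}ᶜ : Set ℝ))) := by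
  have hlim : Tendsto (fun t : ℝ => sintegral ν fun x => sinc (t * x) - 1) atTop
      (𝓝 (sintegral ν (({0}ᶜ : Set ℝ).indicator fun _ => -1))) :=
    tendsto_sintegral_filter_of_dominated_convergence ν (fun _ => 2)
      (.of_forall fun t => by fun_prop)
      (.of_forall fun t => .of_forall fun x => norm_sub_one_le_two (abs_sinc_le_one _))
      (integrable_const 2) (.of_forall tendsto_sinc_mul_sub_one)
  rw [sintegral_indicator_const ν (measurableSet_singleton 0).compl, neg_one_mul] at hlim
  refine hlim.congr' ?_
  filter_upwards [eventually_ne_atTop 0] with t ht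
  exact (average_sintegral_cos_mul_sub_one ν ht).symm

/-- Let `d ≥ 1` and let `μ` be a finite positive-semidefinite-matrix-valued
Borel measure on `ℝ` that is symmetric, and let `Ξ` be the associated matrix-valued function
`Ξ_{k,q}(t) = ∫ (cos(tν) − 1) μ_{k,q}(dν)`. Then, for all indices `k, q`, the Cesàro means
converge: `lim_{t→∞} (1/t) ∫₀ᵗ Ξ_{k,q}(s) ds = −μ_{k,q}(ℝ ∖ {0})`. -/
theorem statement1 {d : ℕ} (hd : 1 ≤ d) (μ : MatrixMeasure d) (hsym : μ.IsSymmetric)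
    (k q : Fin d) :
    Filter.Tendsto (fun t : ℝ => (1/t) * ∫ s in (0:ℝ)..t, Xi μ s k q)
      Filter.atTop (nhds (-(μ.entry k q ({0}ᶜ : Set ℝ)))) :=
  statement1_general (μ.entry k q)
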